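/- For k ≥ 2 and 2p ≥ 2, ∫_{Δ_k^{2p}} G(𝟙_{[t¹₁,t¹₂]}, …, 𝟙_{[t^{2p}_{k−1},t^{2p}_k]}, 𝟙_{[0,1]})^{−1/2} dt⃗ < ∞, where the Gram determinant is taken in L²([0,1]) of all 2p(k−1) interval indicators together with 𝟙_{[0,1]}, and Δ_k^{2p} is the 2p-fold product of the simplex Δ_k. -/

import Mathlib

open MeasureTheory
open scoped RealInnerProductSpace

noncomputable abbrev L2unit : Type :=
  Lp ℝ 2 (volume.restrict (Set.Icc (0 : ℝ) 1))

/-- The indicator `𝟙_{[s,t]}` as an element of `L²([0,1])`. -/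
noncomputable def ind (s t : ℝ) : L2unit :=
  indicatorConstLp 2 (measurableSet_Icc : MeasurableSet (Set.Icc s t))
    (by
      rw [Measure.restrict_apply measurableSet_Icc]
      exact ((measure_mono Set.inter_subset_right).trans_lt measure_Icc_lt_top).ne)
    (1 : ℝ)

lemma det_gram_snoc {E : Type*} [NormedAddCommGroup E] [InnerProductSpace ℝ E] (m : ℕ)
    (v : Fin (m + 1) → E) (h : (Matrix.gram ℝ (fun i : Fin m => v i.castSucc)).det ≠ 0) :
    ∃ c : Fin m → ℝ, (Matrix.gram ℝ v).det =
      (Matrix.gram ℝ (fun i : Fin m => v i.castSucc)).det *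
        ‖v (Fin.last m) - ∑ i, c i • v i.castSucc‖ ^ 2 := by
  set A := Matrix.gram ℝ (fun i : Fin m => v i.castSucc) with hA
  have hu : IsUnit A.det := isUnit_iff_ne_zero.2 h
  let b : Fin m → ℝ := fun i => ⟪v i.castSucc, v (Fin.last m)⟫
  let B : Matrix (Fin m) (Fin 1) ℝ := Matrix.of fun i _ => b i
  let C : Matrix (Fin 1) (Fin m) ℝ := Matrix.of fun _ i => b i
  let D : Matrix (Fin 1) (Fin 1) ℝ := Matrix.of fun _ _ => ⟪v (Fin.last m), v (Fin.last m)⟫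
  have h1 : (Matrix.gram ℝ v).submatrix finSumFinEquiv finSumFinEquiv
      = Matrix.fromBlocks A B C D := by
    ext i j
    rcases i with i | i <;> rcases j with j | j
    · simp [hA, Matrix.gram]; rfl
    · have : j = 0 := Subsingleton.elim _ _
      subst this
      simp [Matrix.gram, B, b]; rfl
    · have : i = 0 := Subsingleton.elim _ _
      subst this
      simp [Matrix.gram, C, b]; exact real_inner_comm _ _
    · have : j = 0 := Subsingleton.elim _ _
      subst this
      have : i = 0 := Subsingleton.elim _ _
      subst this
      simp [Matrix.gram, D]; rfl
  have : Invertible A := Matrix.invertibleOfIsUnitDet A hu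
  let c : Fin m → ℝ := A⁻¹.mulVec b
  have hc : A.mulVec c = b := by
    simp [c, Matrix.mulVec_mulVec, Matrix.mul_nonsing_inv A hu]
  have horth : ∀ i : Fin m, ⟪v (Fin.last m) - ∑ i, c i • v i.castSucc, v i.castSucc⟫ = 0 := by
    intro i
    have := congrFun hc i
    simp only [Matrix.mulVec, dotProduct, hA, Matrix.gram_apply, b] at this
    rw [inner_sub_left, sum_inner, real_inner_comm, ← this, sub_eq_zero]
    refine Finset.sum_congr rfl fun j _ => ?_
    rw [real_inner_smul_left, real_inner_comm, mul_comm]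
  refine ⟨c, ?_⟩
  rw [← Matrix.det_submatrix_equiv_self (finSumFinEquiv (m := m) (n := 1)), h1,
    Matrix.det_fromBlocks₁₁]
  congr 1
  rw [← real_inner_self_eq_norm_sq]
  have h5 : ⟪v (Fin.last m) - ∑ i, c i • v i.castSucc, ∑ i, c i • v i.castSucc⟫ = 0 := by
    conv_lhs => rw [inner_sum]
    exact Finset.sum_eq_zero fun i _ => by rw [real_inner_smul_right, horth i, mul_zero]
  rw [inner_sub_right (v (Fin.last m) - ∑ i, c i • v i.castSucc), h5, sub_zero,
    inner_sub_left, sum_inner]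
  simp only [Matrix.det_fin_one, Matrix.sub_apply, D, Matrix.of_apply]
  congr 1
  rw [Matrix.mul_assoc, Matrix.mul_apply]
  refine Finset.sum_congr rfl fun j _ => ?_
  rw [real_inner_smul_left, mul_comm]
  congr 1
  rw [Matrix.invOf_eq_nonsing_inv]
  rfl

lemma gram_lower_fin {E : Type*} [NormedAddCommGroup E] [InnerProductSpace ℝ E] (m : ℕ)
    (v φ : Fin m → E) (δ : Fin m → ℝ) (hδ : ∀ k, 0 < δ k)
    (h0 : ∀ j k, j < k → ⟪v j, φ k⟫ = 0) (hφ : ∀ k, φ k ≠ 0)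
    (h1 : ∀ k, δ k * ‖φ k‖ ^ 2 ≤ ⟪v k, φ k⟫ ^ 2) :
    ∏ k, δ k ≤ (Matrix.gram ℝ v).det := by
  induction m with
  | zero => simp
  | succ m ih =>
    have ih' := ih (fun i => v i.castSucc) (fun i => φ i.castSucc) (fun i => δ i.castSucc)
      (fun k => hδ _) (fun j k hjk => h0 _ _ (by simpa using hjk)) (fun k => hφ _)
      (fun k => h1 _)
    have hpos : 0 < ∏ k : Fin m, δ k.castSucc := Finset.prod_pos fun k _ => hδ _
    obtain ⟨c, hc⟩ := det_gram_snoc m v (by linarith [lt_of_lt_of_le hpos ih'] : _ < _).ne'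
    rw [hc, Fin.prod_univ_castSucc]
    refine mul_le_mul ih' ?_ (hδ _).le (hpos.le.trans ih')
    set w := v (Fin.last m) - ∑ i, c i • v i.castSucc
    have hw : ⟪w, φ (Fin.last m)⟫ = ⟪v (Fin.last m), φ (Fin.last m)⟫ := by
      simp only [w]
      rw [inner_sub_left, sum_inner, Finset.sum_eq_zero, sub_zero]
      intro i _
      rw [real_inner_smul_left, h0 _ _ (Fin.castSucc_lt_last i), mul_zero]
    have hn : 0 < ‖φ (Fin.last m)‖ ^ 2 := by
      have := norm_pos_iff.2 (hφ (Fin.last m)); positivity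
    have h2 := h1 (Fin.last m)
    rw [← hw] at h2
    have h3 : ⟪w, φ (Fin.last m)⟫ ^ 2 ≤ ‖w‖ ^ 2 * ‖φ (Fin.last m)‖ ^ 2 := by
      rw [← mul_pow, ← sq_abs]
      gcongr
      exact abs_real_inner_le_norm _ _
    exact le_of_mul_le_mul_right (h2.trans h3) hn

lemma gram_lower {E : Type*} [NormedAddCommGroup E] [InnerProductSpace ℝ E] {ι : Type*}
    [Fintype ι] [DecidableEq ι] (r : ι → ℕ) (hr : Function.Injective r)
    (v φ : ι → E) (δ : ι → ℝ) (hδ : ∀ k, 0 < δ k)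
    (h0 : ∀ j k, r j < r k → ⟪v j, φ k⟫ = 0) (hφ : ∀ k, φ k ≠ 0)
    (h1 : ∀ k, δ k * ‖φ k‖ ^ 2 ≤ ⟪v k, φ k⟫ ^ 2) :
    ∏ k, δ k ≤ (Matrix.gram ℝ v).det := by
  let _ : LinearOrder ι := LinearOrder.lift' r hr
  let e : Fin (Fintype.card ι) ≃o ι := Fintype.orderIsoFinOfCardEq ι rfl
  have := gram_lower_fin _ (fun i => v (e i)) (fun i => φ (e i)) (fun i => δ (e i))
    (fun k => hδ _) (fun j k hjk => h0 _ _ (e.lt_iff_lt.2 hjk)) (fun k => hφ _) (fun k => h1 _)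
  have h3 : ∏ k, δ (e k) = ∏ k, δ k := Equiv.prod_comp e.toEquiv δ
  rw [h3] at this
  refine this.trans_eq ?_
  rw [← Matrix.det_submatrix_equiv_self e.toEquiv (Matrix.gram ℝ v)]
  rfl

lemma inner_ind (a b c d : ℝ) :
    ⟪ind a b, ind c d⟫ = max (min b (min d 1) - max a (max c 0)) 0 := by
  unfold ind
  rw [L2.inner_indicatorConstLp_indicatorConstLp]
  simp only [Measure.real, Measure.restrict_apply (measurableSet_Icc.inter measurableSet_Icc)]
  rw [Set.inter_assoc, Set.Icc_inter_Icc, Set.Icc_inter_Icc, Real.volume_Icc]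
  simp [ENNReal.toReal_ofReal']

open scoped ENNReal

/-- test vector -/
noncomputable def tst (x d : ℝ) : L2unit := ind (x - d) x - ind x (x + d)

lemma inner_ind_tst_zero (a b x d : ℝ) (hd : 0 < d) (h0 : d ≤ x) (h1 : x + d ≤ 1)
    (ha : a ≤ x - d ∨ x + d ≤ a) (hb : b ≤ x - d ∨ x + d ≤ b) :
    ⟪ind a b, tst x d⟫ = 0 := by
  unfold tst
  rw [inner_sub_right, inner_ind, inner_ind]
  grind

lemma inner_ind_tst (a x d : ℝ) (hd : 0 < d) (h0 : d ≤ x) (h1 : x + d ≤ 1)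
    (ha : a ≤ x - d) :
    ⟪ind a x, tst x d⟫ = d := by
  unfold tst
  rw [inner_sub_right, inner_ind, inner_ind]
  grind

lemma norm_tst (x d : ℝ) (hd : 0 < d) (h0 : d ≤ x) (h1 : x + d ≤ 1) :
    ‖tst x d‖ ^ 2 = 2 * d := by
  rw [← real_inner_self_eq_norm_sq]
  unfold tst
  rw [inner_sub_right, inner_sub_left, inner_sub_left]
  simp only [inner_ind]
  grind

noncomputable def rho (u : ℝ) : ℝ≥0∞ := (ENNReal.ofReal (Real.sqrt |u|))⁻¹

lemma rho_measurable : Measurable rho := by unfold rho; fun_prop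

lemma rho_zero : rho 0 = ∞ := by simp [rho]

lemma rho_abs (u : ℝ) : rho |u| = rho u := by simp [rho]

lemma one_le_rho (u : ℝ) (hu : |u| ≤ 1) : 1 ≤ rho u := by
  unfold rho
  rw [ENNReal.one_le_inv]
  simpa using hu

lemma rho_le_one (u : ℝ) (hu : 1 ≤ |u|) : rho u ≤ 1 := by
  unfold rho
  rw [ENNReal.inv_le_one]
  simpa using hu

lemma rho_lintegral : ∫⁻ u in Set.Ioo (-1 : ℝ) 1, rho u < ∞ := by
  have h1 : ∫⁻ u in Set.Ioo (0 : ℝ) 1, rho u < ∞ := by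
    have h := (intervalIntegral.integrableOn_Ioo_rpow_iff (s := -(1/2)) (t := 1) one_pos).2
      (by norm_num)
    refine lt_of_le_of_lt (le_of_eq ?_) h.2
    refine setLIntegral_congr_fun measurableSet_Ioo fun u hu => ?_
    have hu0 : 0 < u := hu.1
    simp only [rho]
    rw [Real.enorm_eq_ofReal (by positivity), ← ENNReal.ofReal_inv_of_pos (by positivity),
      abs_of_pos hu0, Real.sqrt_eq_rpow, Real.rpow_neg hu0.le]
  have h2 : ∫⁻ u in Set.Ioo (-1 : ℝ) 0, rho u = ∫⁻ u in Set.Ioo (0 : ℝ) 1, rho u := by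
    have := (Measure.measurePreserving_neg (volume : Measure ℝ)).setLIntegral_comp_preimage
      (measurableSet_Ioo (a := (0:ℝ)) (b := 1)) rho_measurable
    rw [← this]
    simp [rho]
  have h3 : Set.Ioo (-1 : ℝ) 1 ⊆ Set.Ioo (-1) 0 ∪ ({0} ∪ Set.Ioo 0 1) := by
    intro x hx
    rcases lt_trichotomy x 0 with h | h | h
    · left; exact ⟨hx.1, h⟩
    · right; left; exact h
    · right; right; exact ⟨h, hx.2⟩
  refine (lintegral_mono_set h3).trans_lt ?_
  refine (lintegral_union_le _ _ _).trans_lt ?_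
  refine ENNReal.add_lt_top.2 ⟨h2 ▸ h1, ?_⟩
  refine (lintegral_union_le _ _ _).trans_lt ?_
  refine ENNReal.add_lt_top.2 ⟨?_, h1⟩
  simp

noncomputable abbrev mu01 : Measure ℝ := volume.restrict (Set.Icc (0 : ℝ) 1)

instance : IsProbabilityMeasure mu01 := ⟨by simp⟩

lemma rho_bound : ∃ C : ℝ≥0∞, C < ∞ ∧ ∀ s : ℝ, ∫⁻ x, rho (x - s) ∂mu01 ≤ C := by
  refine ⟨(∫⁻ u in Set.Ioo (-1 : ℝ) 1, rho u) + 1, ENNReal.add_lt_top.2 ⟨rho_lintegral, by simp⟩,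
    fun s => ?_⟩
  have h : ∀ x, rho (x - s) ≤ (Set.Ioo (-1 : ℝ) 1).indicator rho (x - s) + 1 := by
    intro x
    by_cases hx : x - s ∈ Set.Ioo (-1 : ℝ) 1
    · rw [Set.indicator_of_mem hx]; exact le_self_add
    · refine (rho_le_one _ ?_).trans le_add_self
      by_contra hh
      push Not at hh
      exact hx (abs_lt.1 hh)
  refine (lintegral_mono h).trans ?_
  rw [lintegral_add_right _ measurable_const]
  refine add_le_add ?_ (by simp)
  refine (lintegral_mono' Measure.restrict_le_self le_rfl).trans ?_
  rw [lintegral_sub_right_eq_self (fun x => (Set.Ioo (-1 : ℝ) 1).indicator rho x) s,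
    lintegral_indicator measurableSet_Ioo]

/-- factor attached to the `k`-th point -/
noncomputable def fac {m : ℕ} (s : Fin m → ℝ) (k : Fin m) : ℝ≥0∞ :=
  2 * (rho (s k - 0) + rho (s k - 1) + ∑ j, if j < k then rho (s k - s j) else 0)

lemma fac_measurable {m : ℕ} (k : Fin m) : Measurable (fun s : Fin m → ℝ => fac s k) := by
  unfold fac
  refine Measurable.const_mul (Measurable.add (Measurable.add ?_ ?_) ?_) _
  · exact rho_measurable.comp (by fun_prop)
  · exact rho_measurable.comp (by fun_prop)
  · refine Finset.measurable_fun_sum _ fun j _ => ?_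
    split_ifs
    · exact rho_measurable.comp (by fun_prop)
    · fun_prop

lemma fac_prod_measurable {m : ℕ} : Measurable (fun s : Fin m → ℝ => ∏ k, fac s k) :=
  Finset.measurable_fun_prod _ fun k _ => fac_measurable k

lemma fac_castSucc {m : ℕ} (s : Fin m → ℝ) (x : ℝ) (k : Fin m) :
    fac (Fin.snoc s x : Fin (m + 1) → ℝ) k.castSucc = fac s k := by
  unfold fac
  rw [Fin.sum_univ_castSucc]
  have : ¬ Fin.last m < k.castSucc := not_lt.2 (Fin.le_last _)
  simp [this]

lemma fac_last {m : ℕ} (s : Fin m → ℝ) (x : ℝ) :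
    fac (Fin.snoc s x : Fin (m + 1) → ℝ) (Fin.last m) =
      2 * (rho (x - 0) + rho (x - 1) + ∑ j, rho (x - s j)) := by
  unfold fac
  rw [Fin.sum_univ_castSucc]
  simp [Fin.castSucc_lt_last]

lemma fac_lintegral (m : ℕ) :
    ∫⁻ s : Fin m → ℝ, ∏ k, fac s k ∂(Measure.pi fun _ => mu01) < ∞ := by
  obtain ⟨C, hC, hb⟩ := rho_bound
  induction m with
  | zero => simp
  | succ m ih =>
    have hmp := (measurePreserving_piFinSuccAbove (fun _ : Fin (m + 1) => mu01) (Fin.last m)).symm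
    rw [← hmp.lintegral_comp_emb (MeasurableEquiv.measurableEmbedding _)]
    rw [lintegral_prod_symm']
    · have key : ∀ y : Fin m → ℝ, ∫⁻ x, ∏ k, fac
          ((MeasurableEquiv.piFinSuccAbove (fun _ => ℝ) (Fin.last m)).symm (x, y)) k ∂mu01
          ≤ (∏ k, fac y k) * (2 * (C + C + m * C)) := by
        intro y
        have h1 : ∀ x, ∏ k, fac
          ((MeasurableEquiv.piFinSuccAbove (fun _ => ℝ) (Fin.last m)).symm (x, y)) k =
            (∏ k, fac y k) * (2 * (rho (x - 0) + rho (x - 1) + ∑ j, rho (x - y j))) := by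
          intro x
          have : (MeasurableEquiv.piFinSuccAbove (fun _ => ℝ) (Fin.last m)).symm (x, y)
            = (Fin.snoc y x : Fin (m + 1) → ℝ) := by
            simp [MeasurableEquiv.piFinSuccAbove_symm_apply]
            rfl
          rw [this, Fin.prod_univ_castSucc, fac_last]
          simp only [fac_castSucc]
        have hm : ∀ s : ℝ, Measurable fun x => rho (x - s) := fun s =>
          rho_measurable.comp (by fun_prop)
        simp_rw [h1]
        have hs1 : Measurable fun x => rho (x - 0) + rho (x - 1) := (hm 0).add (hm 1)
        have hs2 : Measurable fun x => rho (x - 0) + rho (x - 1) + ∑ j, rho (x - y j) :=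
          hs1.add (Finset.measurable_fun_sum _ fun j _ => hm (y j))
        rw [lintegral_const_mul _ (hs2.const_mul 2)]
        gcongr
        rw [lintegral_const_mul _ hs2]
        gcongr
        rw [lintegral_add_left hs1, lintegral_add_left (hm _),
          lintegral_finsetSum _ (fun j _ => hm _)]
        gcongr
        · exact hb _
        · exact hb _
        · refine (Finset.sum_le_sum fun j _ => hb (y j)).trans ?_
          simp
      refine (lintegral_mono key).trans_lt ?_
      rw [lintegral_mul_const _ fac_prod_measurable]
      refine ENNReal.mul_lt_top ih ?_
      finiteness
    · exact fac_prod_measurable.comp (MeasurableEquiv.measurable _)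

lemma flat_lintegral (a b : ℕ) (S : Set (Fin a → Fin b → ℝ))
    (hS : S ⊆ {t | ∀ i j, t i j ∈ Set.Icc (0 : ℝ) 1}) :
    ∫⁻ t in S, ∏ k, fac (fun l => t (finProdFinEquiv.symm l).1 (finProdFinEquiv.symm l).2) k < ∞ := by
  have hvol : (volume : Measure (Fin a → Fin b → ℝ)).restrict
      {t | ∀ i j, t i j ∈ Set.Icc (0 : ℝ) 1} =
      Measure.pi fun _ : Fin a => Measure.pi fun _ : Fin b => mu01 := by
    have : {t : Fin a → Fin b → ℝ | ∀ i j, t i j ∈ Set.Icc (0 : ℝ) 1} =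
        Set.univ.pi fun _ => Set.univ.pi fun _ => Set.Icc (0 : ℝ) 1 := by
      ext t; simp only [Set.mem_pi, Set.mem_ofPred_eq, Set.mem_univ, true_imp_iff]
    rw [this, volume_pi, Measure.restrict_pi_pi]
    simp only [volume_pi, Measure.restrict_pi_pi]
  refine (lintegral_mono_set hS).trans_lt ?_
  rw [hvol]
  have h1 := Measure.infinitePi_map_curry_symm (fun (_ : Fin a) (_ : Fin b) => mu01)
  simp only [Measure.infinitePi_eq_pi] at h1
  have h2 := (measurePreserving_piCongrLeft (fun _ : Fin (a * b) => mu01)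
    (finProdFinEquiv (m := a) (n := b))).map_eq
  rw [← h1, Measure.map_map (by fun_prop) (by fun_prop)] at h2
  have h3 := fac_lintegral (a * b)
  rw [← h2, lintegral_map fac_prod_measurable (by fun_prop)] at h3
  refine lt_of_eq_of_lt (lintegral_congr fun t => ?_) h3
  have : (fun l => t (finProdFinEquiv.symm l).1 (finProdFinEquiv.symm l).2) =
      ((MeasurableEquiv.piCongrLeft (fun _ => ℝ) (finProdFinEquiv (m := a) (n := b))) ∘
        (MeasurableEquiv.curry (Fin a) (Fin b) ℝ).symm) t := by
    ext l
    obtain ⟨q, rfl⟩ := finProdFinEquiv.surjective l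
    rw [Function.comp_apply, MeasurableEquiv.coe_piCongrLeft, Equiv.piCongrLeft_apply_apply,
      Equiv.symm_apply_apply]
    rfl
  rw [this]

lemma exists_gap {m : ℕ} (s : Fin m → ℝ) (k : Fin m) :
    ∃ d : ℝ, 0 ≤ d ∧ d ≤ |s k - 0| ∧ d ≤ |s k - 1| ∧ (∀ j, j < k → d ≤ |s k - s j|) ∧
      2 * rho d ≤ fac s k := by
  classical
  let T : Finset ℝ := {s k - 0, s k - 1} ∪ (Finset.univ.filter (· < k)).image fun j => s k - s j
  obtain ⟨u, hu, hmin⟩ := T.exists_min_image (fun x => |x|) ⟨s k - 0, by simp [T]⟩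
  refine ⟨|u|, abs_nonneg _, hmin _ (by simp [T]), hmin _ (by simp [T]), fun j hj => hmin _ ?_, ?_⟩
  · exact Finset.mem_union_right _ (Finset.mem_image_of_mem _ (by simpa using hj))
  · rw [rho_abs]
    unfold fac
    gcongr
    simp only [T, Finset.mem_union, Finset.mem_insert, Finset.mem_singleton, Finset.mem_image,
      Finset.mem_filter, Finset.mem_univ, true_and] at hu
    rcases hu with (rfl | rfl) | ⟨j, hj, rfl⟩
    · exact le_self_add.trans le_self_add
    · exact le_add_self.trans le_self_add
    · refine le_trans ?_ le_add_self
      refine le_trans ?_ (Finset.single_le_sum (fun _ _ => zero_le) (Finset.mem_univ j))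
      simp [hj]

lemma two_rho (d : ℝ) (hd : 0 < d) : ENNReal.ofReal ((Real.sqrt (d / 2))⁻¹) ≤ 2 * rho d := by
  unfold rho
  have h := Real.sqrt_pos.2 hd
  rw [abs_of_pos hd, ← ENNReal.ofReal_inv_of_pos h,
    show (2 : ℝ≥0∞) = ENNReal.ofReal 2 by simp, ← ENNReal.ofReal_mul (by norm_num)]
  refine ENNReal.ofReal_le_ofReal ?_
  rw [show 2 * (Real.sqrt d)⁻¹ = (Real.sqrt d / 2)⁻¹ by field_simp]
  refine inv_anti₀ (by positivity) ?_
  refine Real.le_sqrt_of_sq_le ?_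
  rw [div_pow, Real.sq_sqrt hd.le]
  linarith

lemma flat_lt {a b : ℕ} (i i' : Fin a) (j j' : Fin b)
    (h : i < i' ∨ (i = i' ∧ j < j')) : finProdFinEquiv (i, j) < finProdFinEquiv (i', j') := by
  rw [Fin.lt_def]
  simp only [finProdFinEquiv_apply_val]
  rcases h with h | ⟨rfl, h⟩
  · have h1 : (i : ℕ) + 1 ≤ i' := h
    have h2 := Nat.mul_le_mul_left b h1
    have := j.2
    rw [mul_add] at h2
    omega
  · have : (j : ℕ) < j' := h
    omega

lemma pointwise (a n : ℕ) (t : Fin a → Fin (n + 1) → ℝ)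
    (ht : ∀ i, Monotone (t i) ∧ ∀ j, t i j ∈ Set.Icc (0 : ℝ) 1)
    (v : (Fin a × Fin n) ⊕ Unit → L2unit)
    (hv : v = Sum.elim (fun q : Fin a × Fin n =>
                ind (t q.1 q.2.castSucc) (t q.1 q.2.succ)) (fun _ => ind 0 1)) :
    ‖(Real.sqrt (Matrix.gram ℝ v).det)⁻¹‖ₑ ≤
      ∏ k, fac (fun l => t (finProdFinEquiv.symm l).1 (finProdFinEquiv.symm l).2) k := by
  set s : Fin (a * (n + 1)) → ℝ :=
    fun l => t (finProdFinEquiv.symm l).1 (finProdFinEquiv.symm l).2 with hs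
  have hst : ∀ i j, s (finProdFinEquiv (i, j)) = t i j := by intro i j; simp only [hs, Equiv.symm_apply_apply]
  have hs01 : ∀ k, s k ∈ Set.Icc (0 : ℝ) 1 := fun k => (ht _).2 _
  choose d hd0 hd1 hd2 hd3 hd4 using exists_gap s
  have hfac1 : ∀ k, 1 ≤ fac s k := by
    intro k
    unfold fac
    have h1 : 1 ≤ rho (s k - 0) := one_le_rho _ (by
      rw [sub_zero, abs_of_nonneg (hs01 k).1]; exact (hs01 k).2)
    calc (1 : ℝ≥0∞) ≤ 2 * 1 := by norm_num
      _ ≤ _ := by gcongr; exact h1.trans (le_self_add.trans le_self_add)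
  by_cases hall : ∀ k, 0 < d k
  swap
  · push Not at hall
    obtain ⟨k, hk⟩ := hall
    have hk0 : d k = 0 := le_antisymm hk (hd0 k)
    have h4 := hd4 k
    rw [hk0, rho_zero, ENNReal.mul_top (by norm_num), top_le_iff] at h4
    have : fac s k ≤ ∏ k, fac s k :=
      Finset.single_le_prod' (fun i _ => hfac1 i) (Finset.mem_univ k)
    rw [h4] at this
    exact le_top.trans this
  -- positive gaps
  let idx : Fin a × Fin n → Fin (a * (n + 1)) := fun q => finProdFinEquiv (q.1, q.2.succ)
  have hx0 : ∀ k, d k ≤ s k := fun k => by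
    have := hd1 k
    rwa [sub_zero, abs_of_nonneg (hs01 k).1] at this
  have hx1 : ∀ k, s k + d k ≤ 1 := fun k => by
    have := hd2 k
    rw [abs_sub_comm, abs_of_nonneg (by linarith [(hs01 k).2])] at this
    linarith
  have hsep : ∀ j k, j < k → s j ≤ s k - d k ∨ s k + d k ≤ s j := by
    intro j k hjk
    rcases le_abs.1 (hd3 k j hjk) with h | h
    · left; linarith
    · right; linarith
  have hpq : ∀ q : Fin a × Fin n, finProdFinEquiv (q.1, q.2.castSucc) < idx q := fun q =>
    flat_lt _ _ _ _ (Or.inr ⟨rfl, Fin.castSucc_lt_succ⟩)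
  let r : (Fin a × Fin n) ⊕ Unit → ℕ := Sum.elim (fun q => (idx q : ℕ)) (fun _ => 0)
  have hidxpos : ∀ q, 0 < (idx q : ℕ) := fun q => lt_of_le_of_lt (Nat.zero_le _) (hpq q)
  have hr : Function.Injective r := by
    rintro (q | u) (q' | u') h
    · have h1 : idx q = idx q' := Fin.ext h
      have h2 := finProdFinEquiv.injective h1
      simp only [Prod.mk.injEq, Fin.succ_inj] at h2
      rw [Prod.ext h2.1 h2.2]
    · exact absurd h (hidxpos q).ne'
    · exact absurd h.symm (hidxpos q').ne'
    · rfl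
  let φ : (Fin a × Fin n) ⊕ Unit → L2unit :=
    Sum.elim (fun q => tst (s (idx q)) (d (idx q))) (fun _ => ind 0 1)
  let δ : (Fin a × Fin n) ⊕ Unit → ℝ := Sum.elim (fun q => d (idx q) / 2) (fun _ => 1)
  have hone : ⟪ind 0 1, ind 0 1⟫ = (1 : ℝ) := by rw [inner_ind]; norm_num
  have hδ : ∀ k, 0 < δ k := by
    rintro (q | u)
    · exact half_pos (hall _)
    · exact one_pos
  have hG : ∏ k, δ k ≤ (Matrix.gram ℝ v).det := by
    refine gram_lower r hr v φ δ hδ ?_ ?_ ?_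
    · rintro (q' | u') (q | u) h
      · have h' : idx q' < idx q := h
        simp only [hv, φ, Sum.elim_inl]
        refine inner_ind_tst_zero _ _ _ _ (hall _) (hx0 _) (hx1 _) ?_ ?_
        · rw [← hst]; exact hsep _ _ ((hpq q').trans h')
        · rw [← hst]; exact hsep _ _ h'
      · exact absurd h (Nat.not_lt_zero _)
      · simp only [hv, φ, Sum.elim_inl, Sum.elim_inr]
        exact inner_ind_tst_zero _ _ _ _ (hall _) (hx0 _) (hx1 _)
          (Or.inl (by linarith [hx0 (idx q)])) (Or.inr (hx1 _))
      · exact absurd h (lt_irrefl _)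
    · rintro (q | u) h
      · have h1 := norm_tst _ _ (hall (idx q)) (hx0 _) (hx1 _)
        have h2 : tst (s (idx q)) (d (idx q)) = 0 := h
        rw [h2] at h1
        have := hall (idx q)
        simp at h1
        linarith
      · have h2 : ind 0 1 = 0 := h
        rw [h2] at hone
        simp at hone
    · rintro (q | u)
      · simp only [hv, φ, δ, Sum.elim_inl]
        rw [norm_tst _ _ (hall (idx q)) (hx0 _) (hx1 _), ← hst q.1 q.2.succ,
          inner_ind_tst _ _ _ (hall (idx q)) (hx0 _) (hx1 _)]
        · apply le_of_eq; ring
        · have hm := (ht q.1).1 (Fin.castSucc_lt_succ (i := q.2)).le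
          rw [← hst, ← hst] at hm
          rcases hsep _ _ (hpq q) with h | h
          · rw [← hst]; exact h
          · exfalso
            have := hall (idx q)
            simp only [idx] at *
            linarith
      · simp only [hv, φ, δ, Sum.elim_inr]
        rw [← real_inner_self_eq_norm_sq, hone]
        norm_num
  have hPpos : 0 < ∏ k, δ k := Finset.prod_pos fun k _ => hδ k
  rw [Real.enorm_eq_ofReal (by positivity)]
  calc ENNReal.ofReal (Real.sqrt (Matrix.gram ℝ v).det)⁻¹
      ≤ ENNReal.ofReal (Real.sqrt (∏ k, δ k))⁻¹ := by
        refine ENNReal.ofReal_le_ofReal (inv_anti₀ (Real.sqrt_pos.2 hPpos) (Real.sqrt_le_sqrt hG))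
    _ = ∏ q, ENNReal.ofReal (Real.sqrt (d (idx q) / 2))⁻¹ := by
        rw [← ENNReal.ofReal_prod_of_nonneg (fun q _ => by positivity)]
        rw [Fintype.prod_sum_type]
        simp only [δ, Sum.elim_inl, Sum.elim_inr, Finset.prod_const_one, mul_one]
        rw [Real.sqrt_prod _ (fun q _ => (half_pos (hall _)).le), Finset.prod_inv_distrib]
    _ ≤ ∏ q, fac s (idx q) := by
        refine Finset.prod_le_prod' fun q _ => ?_
        exact (two_rho _ (hall _)).trans (hd4 _)
    _ ≤ ∏ k, fac s k := by
        rw [← Equiv.prod_comp finProdFinEquiv, Fintype.prod_prod_type, Fintype.prod_prod_type]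
        refine Finset.prod_le_prod' fun i _ => ?_
        rw [Fin.prod_univ_succ]
        exact le_mul_of_one_le_left' (hfac1 _)

/-- For `k = n + 1 ≥ 2` and `2p ≥ 2`, the integral over `Δ_k^{2p}` of
`G(𝟙_{[t¹₁,t¹₂]},…,𝟙_{[t^{2p}_{k−1},t^{2p}_k]},𝟙_{[0,1]})^{−1/2}` is finite,
where the Gram determinant in `L²([0,1])` is of all `2p(k−1)` interval indicators
together with `𝟙_{[0,1]}`. -/
theorem gram_integral_finite (p n : ℕ) (hp : 1 ≤ p) (hn : 1 ≤ n) :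
    IntegrableOn
      (fun t : Fin (2 * p) → Fin (n + 1) → ℝ =>
        (Real.sqrt (Matrix.det (Matrix.of
          fun i j : (Fin (2 * p) × Fin n) ⊕ Unit =>
            ⟪Sum.elim (fun q : Fin (2 * p) × Fin n =>
                ind (t q.1 q.2.castSucc) (t q.1 q.2.succ)) (fun _ => ind 0 1) i,
              Sum.elim (fun q : Fin (2 * p) × Fin n =>
                ind (t q.1 q.2.castSucc) (t q.1 q.2.succ)) (fun _ => ind 0 1) j⟫)))⁻¹)
      {t : Fin (2 * p) → Fin (n + 1) → ℝ |
        ∀ i, Monotone (t i) ∧ ∀ j, t i j ∈ Set.Icc 0 1} := by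
  have _ := hp
  have _ := hn
  constructor
  · refine Measurable.aestronglyMeasurable ?_
    refine Measurable.inv (Continuous.measurable ?_)
    refine Real.continuous_sqrt.comp (Continuous.matrix_det (continuous_matrix fun i j => ?_))
    rcases i with i | i <;> rcases j with j | j <;>
      simp only [Matrix.of_apply, Sum.elim_inl, Sum.elim_inr, inner_ind] <;> fun_prop
  · refine lt_of_le_of_lt ?_ (flat_lintegral (2 * p) (n + 1) {t : Fin (2 * p) → Fin (n + 1) → ℝ |
        ∀ i, Monotone (t i) ∧ ∀ j, t i j ∈ Set.Icc 0 1} fun t ht i j => (ht i).2 j)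
    refine setLIntegral_mono' ?_ fun t ht => pointwise (2 * p) n t ht _ rfl
    have : {t : Fin (2 * p) → Fin (n + 1) → ℝ |
        ∀ i, Monotone (t i) ∧ ∀ j, t i j ∈ Set.Icc 0 1} =
        (⋂ i, ⋂ j, ⋂ k, {t | j ≤ k → t i j ≤ t i k}) ∩ ⋂ i, ⋂ j, {t | t i j ∈ Set.Icc 0 1} := by
      ext t
      simp only [Set.mem_ofPred_eq, Set.mem_inter_iff, Set.mem_iInter, Monotone]
      exact forall_and
    rw [this]
    refine MeasurableSet.inter ?_ ?_
    · refine .iInter fun i => .iInter fun j => .iInter fun k => ?_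
      by_cases h : j ≤ k
      · simp only [h, true_imp_iff]
        exact measurableSet_le (by fun_prop) (by fun_prop)
      · simp [h]
    · refine .iInter fun i => .iInter fun j => ?_
      exact (show Measurable fun t : Fin (2 * p) → Fin (n + 1) → ℝ => t i j by fun_prop)
        measurableSet_Icc
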